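/- The ideal 𝔭 = (3, 1+ω) of 𝓞_K, where K = ℚ(√−17), is a prime ideal of absolute norm 3, and its ideal class has order 4 in the class group Cl(K); in particular, since Cl(K) has order 4, this class generates Cl(K). -/

import Mathlib

open NumberField nonZeroDivisors

/-!
Write `t = 1 + ζ` with `ζ = √-17`, so that `t (t - 2) = -18`. Multiplication of ideals `(m, t)` is
Dirichlet's composition of binary forms: `(3, t)² = (9, t)`, `(9, t)² = (t - 9)` and
`(9, t) (2, t) = (t)`. Since `𝓞_K = ℤ[√-17]`, an ideal `(m, a + ζ)` with `1 < m < 17` and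
`m ∣ a² + 17` is not principal: a generator would have norm `m < 17`, hence be an integer, which
cannot divide `a + ζ`. So the class of `(3, t)` has order `4`. The Minkowski bound is less than `6`,
the prime `5` is inert, and the classes of the primes above `2` and `3` are powers of the class of
`(3, t)`.
-/

section QuadraticAlgebra

variable {R : Type*} [CommRing R] {a b : R}

theorem leftMulMatrix_quadraticAlgebra_basis (z : QuadraticAlgebra R a b) :
    Algebra.leftMulMatrix (QuadraticAlgebra.basis a b) z =
      !![z.re, a * z.im; z.im, z.re + b * z.im] := by
  ext i j
  rw [Algebra.leftMulMatrix_eq_repr_mul]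
  fin_cases i <;> fin_cases j <;> simp [QuadraticAlgebra.basis]

theorem algebra_norm_quadraticAlgebra (z : QuadraticAlgebra R a b) :
    Algebra.norm R z = z.norm := by
  rw [Algebra.norm_apply, ← QuadraticAlgebra.det_toLinearMap_eq_norm]
  rfl

theorem algebra_trace_quadraticAlgebra (z : QuadraticAlgebra R a b) :
    Algebra.trace R (QuadraticAlgebra R a b) z = z.trace := by
  rw [Algebra.trace_eq_matrix_trace (QuadraticAlgebra.basis a b),
    leftMulMatrix_quadraticAlgebra_basis, Matrix.trace_fin_two_of, QuadraticAlgebra.trace_def]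
  ring

theorem discr_quadraticAlgebra_basis :
    Algebra.discr R (QuadraticAlgebra.basis a b) = b ^ 2 + 4 * a := by
  simp only [QuadraticAlgebra.basis, Module.Basis.coe_ofEquivFun,
    QuadraticAlgebra.linearEquivTuple_symm_apply, Fin.isValue, Algebra.discr_def,
    Matrix.det_fin_two, Algebra.traceMatrix_apply, Pi.single_eq_same, ne_eq, one_ne_zero,
    not_false_eq_true, Pi.single_eq_of_ne, Algebra.traceForm_apply, QuadraticAlgebra.mk_mul_mk,
    mul_one, mul_zero, add_zero, algebra_trace_quadraticAlgebra, QuadraticAlgebra.trace_def,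
    zero_ne_one, zero_add]
  ring

end QuadraticAlgebra

section RingOfIntegers

open scoped QuadraticAlgebra

theorem exists_intCast_eq_of_squarefree_mul_sq {d : ℤ} (hd : Squarefree d) {q : ℚ} {k : ℤ}
    (h : d * q ^ 2 = k) : ∃ n : ℤ, q = n := by
  have hden : (q.den : ℤ) * q.den ∣ d * q.num ^ 2 := by
    refine ⟨k, ?_⟩
    have : (q.den : ℚ) ≠ 0 := by positivity
    rw [← Rat.num_div_den q] at h
    field_simp at h
    exact_mod_cast (by linear_combination h : (d * q.num ^ 2 : ℚ) = q.den * q.den * k)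
  have hdvd := hd.dvd_of_squarefree_of_mul_dvd_mul_right hden
  have hcop : IsCoprime (q.den : ℤ) (q.num ^ 2) := q.isCoprime_num_den.symm.pow_right
  have hone : q.den = 1 := by simpa [Int.isUnit_iff] using hcop.isUnit_of_dvd' dvd_rfl hdvd
  exact ⟨q.num, (Rat.coe_int_num_of_den_eq_one hone).symm⟩

theorem even_and_even_of_four_dvd_sq_sub_mul_sq {d m n : ℤ} (hd : ¬ 4 ∣ d) (hd1 : ¬ 4 ∣ d - 1)
    (h : 4 ∣ m ^ 2 - d * n ^ 2) : Even m ∧ Even n := by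
  rcases m.even_or_odd' with ⟨u, rfl | rfl⟩ <;> rcases n.even_or_odd' with ⟨v, rfl | rfl⟩
  · simp
  · exact absurd (by grind : 4 ∣ d) hd
  · grind
  · exact absurd (by grind : 4 ∣ d - 1) hd1

theorem exists_int_re_im_of_isIntegral {d : ℤ} (hd : Squarefree d) (hd1 : ¬ 4 ∣ d - 1)
    {z : QuadraticAlgebra ℚ (d : ℚ) 0} (hz : IsIntegral ℤ z) :
    ∃ r s : ℤ, z.re = r ∧ z.im = s := by
  have hinj := QuadraticAlgebra.algebraMap_injective (a := (d : ℚ)) (b := 0)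
  have hstar : IsIntegral ℤ (star z) := hz.map (starRingEnd _).toIntAlgHom
  have htrace : IsIntegral ℤ z.trace := by
    rw [← isIntegral_algebraMap_iff hinj, QuadraticAlgebra.algebraMap_trace_eq_add_star]
    exact hz.add hstar
  have hnorm : IsIntegral ℤ z.norm := by
    rw [← isIntegral_algebraMap_iff hinj, QuadraticAlgebra.algebraMap_norm_eq_mul_star]
    exact hz.mul hstar
  obtain ⟨m, hm⟩ := IsIntegrallyClosed.isIntegral_iff.mp htrace
  obtain ⟨k, hk⟩ := IsIntegrallyClosed.isIntegral_iff.mp hnorm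
  simp only [algebraMap_int_eq, eq_intCast, QuadraticAlgebra.trace_def,
    QuadraticAlgebra.norm_def, zero_mul, add_zero] at hm hk
  obtain ⟨n, hn⟩ := exists_intCast_eq_of_squarefree_mul_sq hd (q := 2 * z.im) (k := m ^ 2 - 4 * k)
    (by push_cast; rw [hm, hk]; ring)
  have hmn : m ^ 2 - d * n ^ 2 = 4 * k := by
    have : (m ^ 2 - d * n ^ 2 : ℚ) = 4 * k := by rw [hm, ← hn, hk]; ring
    exact_mod_cast this
  have hd4 : ¬ 4 ∣ d := fun h ↦ absurd (hd 2 h) (by decide)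
  obtain ⟨⟨r, rfl⟩, s, rfl⟩ := even_and_even_of_four_dvd_sq_sub_mul_sq hd4 hd1 ⟨k, hmn⟩
  push_cast at hm hn
  exact ⟨r, s, by linarith, by linarith⟩

theorem quadraticAlgebra_lift_omega {R A : Type*} [CommRing R] [Ring A] [Algebra R A] {a b : R}
    (u : { u : A // u * u = a • 1 + b • u }) :
    QuadraticAlgebra.lift u ω = (u : A) :=
  congrArg Subtype.val (QuadraticAlgebra.lift.symm_apply_apply u)

theorem exists_quadraticAlgebra_algEquiv_of_adjoin_eq_top {F A : Type*} [Field F] [CommRing A]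
    [Nontrivial A] [Algebra F A] {d : F} (hd : ¬ IsSquare d) {α : A} (hα : α ^ 2 = algebraMap F A d)
    (hA : Algebra.adjoin F {α} = ⊤) :
    ∃ e : QuadraticAlgebra F d 0 ≃ₐ[F] A, e ω = α := by
  have : Fact (∀ r : F, r ^ 2 ≠ d + 0 * r) := ⟨fun r hr ↦ hd ⟨r, by linear_combination -hr⟩⟩
  let f : QuadraticAlgebra F d 0 →ₐ[F] A :=
    QuadraticAlgebra.lift ⟨α, by rw [← sq, hα, zero_smul, add_zero, Algebra.algebraMap_eq_smul_one]⟩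
  have hf : f ω = α := quadraticAlgebra_lift_omega _
  have hsurj : Function.Surjective f := by
    rw [← AlgHom.range_eq_top, ← top_le_iff, ← hA]
    exact Algebra.adjoin_singleton_le ⟨_, hf⟩
  exact ⟨.ofBijective f ⟨f.toRingHom.injective, hsurj⟩, hf⟩

theorem exists_quadraticAlgebra_algEquiv_ringOfIntegers {K : Type*} [Field K] [CharZero K] {d : ℤ}
    (hd : Squarefree d) (hd1 : ¬ 4 ∣ d - 1) {ζ : 𝓞 K} (hζ : ζ ^ 2 = d)
    (hK : Algebra.adjoin ℚ {algebraMap (𝓞 K) K ζ} = ⊤) :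
    ∃ e : QuadraticAlgebra ℤ d 0 ≃ₐ[ℤ] 𝓞 K, e ω = ζ := by
  have hsq : ¬ IsSquare (d : ℚ) := by
    rw [Rat.isSquare_intCast_iff]
    rintro ⟨r, rfl⟩
    exact hd1 (by simp [Int.isUnit_mul_self (hd r dvd_rfl)])
  have hζK : algebraMap (𝓞 K) K ζ ^ 2 = algebraMap ℚ K d := by
    rw [← map_pow, hζ, map_intCast, map_intCast]
  obtain ⟨g, hg⟩ := exists_quadraticAlgebra_algEquiv_of_adjoin_eq_top hsq hζK hK
  let f : QuadraticAlgebra ℤ d 0 →ₐ[ℤ] 𝓞 K := QuadraticAlgebra.lift ⟨ζ, by simp [← sq, hζ]⟩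
  have hfg (r s : ℤ) : algebraMap (𝓞 K) K (f ⟨r, s⟩) = g ⟨r, s⟩ := by
    simp [QuadraticAlgebra.mk_eq_add_smul_omega, f, hg, Int.cast_smul_eq_zsmul]
  refine ⟨.ofBijective f ⟨fun x y hxy ↦ ?_, fun x ↦ ?_⟩, quadraticAlgebra_lift_omega _⟩
  · have := g.injective ((hfg _ _).symm.trans ((congrArg _ hxy).trans (hfg _ _)))
    simpa [QuadraticAlgebra.ext_iff] using this
  · have hint : IsIntegral ℤ (g.symm (algebraMap (𝓞 K) K x)) :=
      (RingOfIntegers.isIntegral_coe x).map (g.symm.restrictScalars ℤ)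
    obtain ⟨r, s, hr, hs⟩ := exists_int_re_im_of_isIntegral hd hd1 hint
    refine ⟨⟨r, s⟩, RingOfIntegers.coe_injective ?_⟩
    rw [hfg, ← hr, ← hs, QuadraticAlgebra.mk_eta, g.apply_symm_apply]

end RingOfIntegers

section IdealProducts

variable {S : Type*} [CommRing S] {m n t c k u v w : S}

theorem span_pair_mul_span_pair_of_dvd (huvw : u * m + v * n + w * c = 1)
    (hdvd : m * n ∣ t * (t - c)) :
    Ideal.span {m, t} * Ideal.span {n, t} = Ideal.span {m * n, t} := by
  obtain ⟨k, hk⟩ := hdvd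
  rw [Ideal.span_pair_mul_span_pair]
  apply le_antisymm <;> rw [Ideal.span_le]
  · rintro x (rfl | rfl | rfl | rfl) <;> rw [SetLike.mem_coe, Ideal.mem_span_pair]
    · exact ⟨1, 0, by ring⟩
    · exact ⟨0, m, by ring⟩
    · exact ⟨0, n, by ring⟩
    · exact ⟨0, t, by ring⟩
  · rintro x (rfl | rfl)
    · exact Ideal.subset_span (by simp)
    · simp only [SetLike.mem_coe, Ideal.mem_span_insert, Ideal.mem_span_singleton']
      exact ⟨-w * k, _, ⟨u, _, ⟨v, _, ⟨w, rfl⟩, rfl⟩, rfl⟩, by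
        linear_combination -x * huvw - w * hk⟩

theorem span_pair_mul_span_pair_sub (huvw : u * m + v * c + w * k = 1)
    (hk : t * (t - c) = m * k) :
    Ideal.span {m, t} * Ideal.span {m, t - c} = Ideal.span {m} := by
  rw [Ideal.span_pair_mul_span_pair]
  apply le_antisymm
  · rw [Ideal.span_le]
    rintro x (rfl | rfl | rfl | rfl) <;> rw [SetLike.mem_coe, Ideal.mem_span_singleton]
    · exact ⟨m, rfl⟩
    · exact ⟨t - c, rfl⟩
    · exact ⟨t, mul_comm _ _⟩
    · exact ⟨k, hk⟩
  · rw [Ideal.span_singleton_le_iff_mem]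
    simp only [Ideal.mem_span_insert, Ideal.mem_span_singleton']
    exact ⟨u, _, ⟨-v, _, ⟨v, _, ⟨w, rfl⟩, rfl⟩, rfl⟩, by
      linear_combination -m * huvw - w * hk⟩

end IdealProducts

section QuadraticIdeals

open scoped QuadraticAlgebra

variable {S : Type*} [CommRing S] {d : ℤ}

theorem algEquiv_omega_sq (e : QuadraticAlgebra ℤ d 0 ≃ₐ[ℤ] S) : e ω ^ 2 = d := by
  rw [sq, ← map_mul, QuadraticAlgebra.omega_mul_omega_eq_add]
  simp

theorem exists_span_pair_quotient_equiv_zmod (e : QuadraticAlgebra ℤ d 0 ≃ₐ[ℤ] S)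
    {m : ℕ} {a : ℤ} (hm : (m : ℤ) ∣ a ^ 2 - d) :
    Nonempty (S ⧸ Ideal.span {(m : S), a + e ω} ≃+* ZMod m) := by
  have ha : (-a : ZMod m) * -a = d • 1 + (0 : ℤ) • -a := by
    have hcast := (ZMod.intCast_zmod_eq_zero_iff_dvd _ m).mpr hm
    push_cast at hcast
    rw [zero_smul, zsmul_one]
    linear_combination hcast
  let f : S →+* ZMod m :=
    ((QuadraticAlgebra.lift ⟨(-a : ZMod m), ha⟩).comp e.symm.toAlgHom).toRingHom
  have hf (z : QuadraticAlgebra ℤ d 0) : f (e z) = ((z.re - a * z.im : ℤ) : ZMod m) := by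
    simp only [AlgHom.toRingHom_eq_coe, RingHom.coe_coe, AlgHom.coe_comp, AlgEquiv.coe_toAlgHom,
      Function.comp_apply, AlgEquiv.symm_apply_apply, QuadraticAlgebra.lift_apply_apply,
      zsmul_eq_mul, mul_one, smul_neg, Int.cast_sub, Int.cast_mul, f]
    ring
  have hker : Ideal.span {(m : S), a + e ω} = RingHom.ker f := by
    apply le_antisymm
    · rw [Ideal.span_le]
      rintro x (rfl | rfl)
      · simp
      · simp [hf]
    · intro x hx
      obtain ⟨z, rfl⟩ := e.surjective x
      rw [RingHom.mem_ker, hf, ZMod.intCast_zmod_eq_zero_iff_dvd] at hx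
      obtain ⟨k, hk⟩ := hx
      refine Ideal.mem_span_pair.mpr ⟨k, z.im, ?_⟩
      have hz : e z = z.re + z.im * e ω := by
        conv_lhs => rw [← QuadraticAlgebra.mk_eta z, QuadraticAlgebra.mk_eq_add_smul_omega]
        simp
      have hre : (z.re : S) = m * k + a * z.im := by
        exact_mod_cast congrArg (Int.cast (R := S)) (sub_eq_iff_eq_add.mp hk)
      rw [hz, hre]
      ring
  exact ⟨(Ideal.quotEquivOfEq hker).trans
    (RingHom.quotientKerEquivOfSurjective (ZMod.ringHom_surjective f))⟩

theorem isMaximal_span_pair (e : QuadraticAlgebra ℤ d 0 ≃ₐ[ℤ] S) {p : ℕ} (hp : p.Prime) {a : ℤ}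
    (hpa : (p : ℤ) ∣ a ^ 2 - d) :
    (Ideal.span {(p : S), a + e ω}).IsMaximal := by
  have := Fact.mk hp
  obtain ⟨f⟩ := exists_span_pair_quotient_equiv_zmod e hpa
  exact Ideal.Quotient.maximal_of_isField _ (f.toMulEquiv.isField (Field.toIsField _))

theorem eq_span_pair_of_isPrime_of_natCast_mem (e : QuadraticAlgebra ℤ d 0 ≃ₐ[ℤ] S) {p : ℕ}
    (hp : p.Prime) {a : ℤ} (hpa : (p : ℤ) ∣ a ^ 2 - d) {I : Ideal S} (hI : I.IsPrime)
    (hpI : (p : S) ∈ I) :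
    I = Ideal.span {(p : S), a + e ω} ∨ I = Ideal.span {(p : S), (-a : ℤ) + e ω} := by
  have heq {c : ℤ} (hc : (p : ℤ) ∣ c ^ 2 - d) (h : c + e ω ∈ I) :
      I = Ideal.span {(p : S), c + e ω} :=
    ((isMaximal_span_pair e hp hc).eq_of_le hI.ne_top
      (Ideal.span_le.mpr (Set.pair_subset hpI h))).symm
  have hmul : (a + e ω) * ((-a : ℤ) + e ω) ∈ I := by
    obtain ⟨k, hk⟩ := hpa
    convert I.mul_mem_right (-k : S) hpI using 1
    have hk' : (a ^ 2 - d : S) = p * k := by exact_mod_cast congrArg (Int.cast (R := S)) hk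
    push_cast
    linear_combination algEquiv_omega_sq e - hk'
  exact (hI.mem_or_mem hmul).imp (heq hpa) (heq (by rwa [neg_sq]))

variable [IsDedekindDomain S] [Module.Free ℤ S]

theorem absNorm_span_pair (e : QuadraticAlgebra ℤ d 0 ≃ₐ[ℤ] S) {m : ℕ} {a : ℤ}
    (hm : (m : ℤ) ∣ a ^ 2 - d) :
    Ideal.absNorm (Ideal.span {(m : S), a + e ω}) = m := by
  obtain ⟨f⟩ := exists_span_pair_quotient_equiv_zmod e hm
  rw [Ideal.absNorm_apply, Submodule.cardQuot_apply, Nat.card_congr f.toEquiv, Nat.card_zmod]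

theorem not_isPrincipal_span_pair (e : QuadraticAlgebra ℤ d 0 ≃ₐ[ℤ] S) {m : ℕ} {a : ℤ}
    (hm : (m : ℤ) ∣ a ^ 2 - d) (hm1 : m ≠ 1) (hmd : m < -d) :
    ¬ (Ideal.span {(m : S), a + e ω}).IsPrincipal := by
  rintro ⟨x, hx⟩
  rw [Ideal.submodule_span_eq] at hx
  obtain ⟨z, rfl⟩ := e.surjective x
  have := Module.Finite.equiv e.toLinearEquiv
  have hnorm : z.norm.natAbs = m := by
    rw [← absNorm_span_pair e hm, hx, Ideal.absNorm_span_singleton, Algebra.norm_eq_of_algEquiv,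
      algebra_norm_quadraticAlgebra]
  rw [QuadraticAlgebra.norm_def] at hnorm
  have : d < 0 := by lia
  have hzm : z.re ^ 2 - d * z.im ^ 2 = m := by
    rw [← hnorm, Int.natCast_natAbs, abs_of_nonneg (by nlinarith [sq_nonneg z.re, sq_nonneg z.im])]
    ring
  have him : z.im = 0 := by
    by_contra him
    have : 0 < z.im ^ 2 := by positivity
    nlinarith [sq_nonneg z.re]
  have hmem : a + e ω ∈ Ideal.span {e z} := hx ▸ Ideal.subset_span (by simp)
  obtain ⟨y, hy⟩ := Ideal.mem_span_singleton.mp hmem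
  obtain ⟨w, rfl⟩ := e.surjective y
  have hzw : ((a : QuadraticAlgebra ℤ d 0) + ω) = z * w := e.injective (by simpa using hy)
  have hre : z.re * w.im = 1 := by simpa [him] using congrArg QuadraticAlgebra.im hzw.symm
  have hunit : z.re ^ 2 = 1 := by
    rw [sq, Int.isUnit_mul_self (IsUnit.of_mul_eq_one _ hre)]
  exact hm1 (by simpa [him, hunit] using hzm.symm)

theorem isSquare_of_absNorm_eq_prime {I : Ideal S} {p : ℕ} (hp : p.Prime)
    (hI : Ideal.absNorm I = p) (hd : IsSquare (d : S)) : IsSquare (d : ZMod p) := by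
  have hcard : Nat.card (S ⧸ I) = p := by
    rw [← hI, Ideal.absNorm_apply, Submodule.cardQuot_apply]
  have := Nat.finite_of_card_ne_zero (hcard ▸ hp.ne_zero)
  have := Fintype.ofFinite (S ⧸ I)
  rw [Nat.card_eq_fintype_card] at hcard
  let f : S →+* ZMod p :=
    (ZMod.ringEquivOfPrime (S ⧸ I) hp hcard).symm.toRingHom.comp (Ideal.Quotient.mk I)
  simpa only [map_intCast] using hd.map f

end QuadraticIdeals

section ClassGroup

variable {R : Type*} [CommRing R] [IsDedekindDomain R] {H : Subgroup (ClassGroup R)}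

theorem mk0_mem_of_forall_isPrime_le {I : Ideal R} (hI : I ∈ (Ideal R)⁰)
    (h : ∀ (J : Ideal R) (hJ : J ∈ (Ideal R)⁰), J.IsPrime → I ≤ J →
      ClassGroup.mk0 ⟨J, hJ⟩ ∈ H) :
    ClassGroup.mk0 ⟨I, hI⟩ ∈ H := by
  induction I using UniqueFactorizationMonoid.induction_on_prime with
  | h₁ => exact absurd rfl (nonZeroDivisors.ne_zero hI)
  | h₂ I hu =>
    have hone : (⟨I, hI⟩ : (Ideal R)⁰) = 1 := Subtype.ext (by simpa using hu)
    rw [hone, map_one]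
    exact H.one_mem
  | h₃ I p hI0 hp ih =>
    have hp0 := mem_nonZeroDivisors_of_ne_zero hp.ne_zero
    have hI0' := mem_nonZeroDivisors_of_ne_zero hI0
    have hmul : (⟨p * I, hI⟩ : (Ideal R)⁰) = ⟨p, hp0⟩ * ⟨I, hI0'⟩ := rfl
    rw [hmul, map_mul]
    exact H.mul_mem (h p hp0 (Ideal.isPrime_of_prime hp) Ideal.mul_le_left)
      (ih hI0' fun J hJ hJp hIJ ↦ h J hJ hJp (Ideal.mul_le_right.trans hIJ))

theorem mk0_mem_of_mul_eq_span_singleton {I J : (Ideal R)⁰} {x : R}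
    (h : (J * I : Ideal R) = Ideal.span {x}) (hI : ClassGroup.mk0 I ∈ H) :
    ClassGroup.mk0 J ∈ H := by
  have hone : ClassGroup.mk0 J * ClassGroup.mk0 I = 1 := by
    rw [← map_mul, ClassGroup.mk0_eq_one_iff]
    exact ⟨x, h⟩
  rw [eq_inv_of_mul_eq_one_left hone]
  exact inv_mem hI

end ClassGroup

section QuadraticField

variable {K : Type*} [Field K] [NumberField K] {d : ℤ}

theorem exists_ideal_in_class_of_finrank_eq_two (hK : Module.finrank ℚ K = 2)
    (C : ClassGroup (𝓞 K)) :
    ∃ I : (Ideal (𝓞 K))⁰, ClassGroup.mk0 I = C ∧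
      (Ideal.absNorm (I : Ideal (𝓞 K)) : ℝ) ≤ 2 / Real.pi * √|(discr K : ℝ)| := by
  obtain ⟨I, hIC, hI⟩ := exists_ideal_in_class_of_norm_le C
  refine ⟨I, hIC, hI.trans ?_⟩
  have hcomplex : InfinitePlace.nrComplexPlaces K ≤ 1 := by
    have := InfinitePlace.card_add_two_mul_card_eq_rank K
    lia
  have hpi : 1 ≤ 4 / Real.pi := (one_le_div Real.pi_pos).mpr Real.pi_le_four
  rw [hK]
  calc (4 / Real.pi) ^ InfinitePlace.nrComplexPlaces K *
        ((2).factorial / (2 : ℕ) ^ 2 * √|(discr K : ℝ)|)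
      ≤ (4 / Real.pi) ^ 1 * ((2).factorial / (2 : ℕ) ^ 2 * √|(discr K : ℝ)|) := by gcongr
    _ = 2 / Real.pi * √|(discr K : ℝ)| := by norm_num [Nat.factorial]; ring

theorem finrank_eq_two_of_quadraticAlgebra_algEquiv (e : QuadraticAlgebra ℤ d 0 ≃ₐ[ℤ] 𝓞 K) :
    Module.finrank ℚ K = 2 := by
  rw [← RingOfIntegers.rank K, ← e.toLinearEquiv.finrank_eq, QuadraticAlgebra.finrank_eq_two]

theorem discr_eq_four_mul_of_quadraticAlgebra_algEquiv (e : QuadraticAlgebra ℤ d 0 ≃ₐ[ℤ] 𝓞 K) :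
    discr K = 4 * d := by
  rw [← discr_eq_discr K ((QuadraticAlgebra.basis d 0).map e.toLinearEquiv)]
  have hmap :
      ⇑((QuadraticAlgebra.basis d 0).map e.toLinearEquiv) = e ∘ QuadraticAlgebra.basis d 0 := by
    ext
    simp
  rw [hmap, ← Algebra.discr_eq_discr_of_algEquiv, discr_quadraticAlgebra_basis]
  ring

end QuadraticField

section SqrtNegSeventeen

open scoped QuadraticAlgebra

section

variable {S : Type*} [CommRing S] {ζ : S}

theorem one_add_mul_sub_two (hζ : ζ ^ 2 = -17) : (1 + ζ) * (1 + ζ - 2) = -18 := by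
  linear_combination hζ

theorem span_three_pow_two (hζ : ζ ^ 2 = -17) :
    Ideal.span {3, 1 + ζ} ^ 2 = Ideal.span {9, 1 + ζ} := by
  have hdvd : 3 * 3 ∣ (1 + ζ) * (1 + ζ - 2) := ⟨-2, by rw [one_add_mul_sub_two hζ]; norm_num⟩
  have hbezout : (1 * 3 + 0 * 3 + -1 * 2 : S) = 1 := by norm_num
  rw [sq, span_pair_mul_span_pair_of_dvd hbezout hdvd]
  norm_num

theorem span_three_pow_four (hζ : ζ ^ 2 = -17) :
    Ideal.span {3, 1 + ζ} ^ 4 = Ideal.span {ζ - 8} := by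
  have hnine : Ideal.span {9, 1 + ζ} = Ideal.span {9, ζ - 8} := by
    rw [← Ideal.span_pair_add_mul_left (x := (9 : S)) (y := ζ - 8) (z := 1)]
    ring_nf
  have hmul : (ζ - 8) * (ζ - 8 - -16) = 9 * 9 * -1 := by linear_combination hζ
  have hbezout : (9 * 9 + 0 * 9 + 5 * -16 : S) = 1 := by norm_num
  rw [pow_mul _ 2 2, span_three_pow_two hζ, hnine, sq,
    span_pair_mul_span_pair_of_dvd hbezout (Dvd.intro _ hmul.symm), Ideal.span_insert,
    sup_eq_right, Ideal.span_singleton_le_span_singleton]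
  exact ⟨-(ζ + 8), by linear_combination hζ⟩

theorem span_two_mul_span_nine (hζ : ζ ^ 2 = -17) :
    Ideal.span {2, 1 + ζ} * Ideal.span {9, 1 + ζ} = Ideal.span {1 + ζ} := by
  have hmul := one_add_mul_sub_two hζ
  have hbezout : (-4 * 2 + 1 * 9 + 0 * 2 : S) = 1 := by norm_num
  rw [span_pair_mul_span_pair_of_dvd hbezout ⟨-1, by rw [hmul]; norm_num⟩, Ideal.span_insert,
    sup_eq_right, Ideal.span_singleton_le_span_singleton]
  exact ⟨-(1 + ζ - 2), by linear_combination hmul⟩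

theorem span_three_mul_span_three_conj (hζ : ζ ^ 2 = -17) :
    Ideal.span {3, -1 + ζ} * Ideal.span {3, 1 + ζ} = Ideal.span {3} := by
  have hmul : (1 + ζ) * (1 + ζ - 2) = 3 * -6 := by rw [one_add_mul_sub_two hζ]; norm_num
  have hbezout : (1 * 3 + -1 * 2 + 0 * -6 : S) = 1 := by norm_num
  rw [mul_comm, ← span_pair_mul_span_pair_sub hbezout hmul]
  ring_nf

end

variable {S : Type*} [CommRing S] [IsDedekindDomain S] [Module.Free ℤ S]

theorem eq_span_of_isPrime_of_absNorm_le_five (e : QuadraticAlgebra ℤ (-17) 0 ≃ₐ[ℤ] S)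
    {I : Ideal S} (hI : I.IsPrime) (hI0 : Ideal.absNorm I ≠ 0) (hI5 : Ideal.absNorm I ≤ 5) :
    I = Ideal.span {2, 1 + e ω} ∨ I = Ideal.span {3, 1 + e ω} ∨
      I = Ideal.span {3, -1 + e ω} := by
  have of_two (h : (2 : S) ∈ I) : I = Ideal.span {2, 1 + e ω} := by
    have hconj : Ideal.span {2, -1 + e ω} = Ideal.span {2, 1 + e ω} := by
      rw [← Ideal.span_pair_add_mul_left (z := 1)]
      ring_nf
    simpa [hconj] using eq_span_pair_of_isPrime_of_natCast_mem e Nat.prime_two (a := 1)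
      (by norm_num) hI (by simpa using h)
  have of_three (h : (3 : S) ∈ I) : I = Ideal.span {3, 1 + e ω} ∨ I = Ideal.span {3, -1 + e ω} := by
    simpa using eq_span_pair_of_isPrime_of_natCast_mem e Nat.prime_three (a := 1)
      (by norm_num) hI (by simpa using h)
  have hone : Ideal.absNorm I ≠ 1 := mt Ideal.absNorm_eq_one_iff.mp hI.ne_top
  have hsq : IsSquare ((-17 : ℤ) : S) := ⟨e ω, by rw [← sq, algEquiv_omega_sq]⟩
  have hfive : Ideal.absNorm I ≠ 5 := fun h ↦
    absurd (isSquare_of_absNorm_eq_prime Nat.prime_five h hsq) (by decide)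
  have hmem := Ideal.absNorm_mem I
  generalize Ideal.absNorm I = n at *
  interval_cases n
  · contradiction
  · contradiction
  · exact .inl (of_two (by simpa using hmem))
  · exact .inr (of_three (by simpa using hmem))
  · refine .inl (of_two (hI.mem_of_pow_mem 2 ?_))
    convert hmem using 1
    norm_num
  · contradiction

variable {K : Type*} [Field K] [NumberField K]

theorem exists_ideal_in_class_of_absNorm_le_five (e : QuadraticAlgebra ℤ (-17) 0 ≃ₐ[ℤ] 𝓞 K)
    (C : ClassGroup (𝓞 K)) :
    ∃ I : (Ideal (𝓞 K))⁰, ClassGroup.mk0 I = C ∧ Ideal.absNorm (I : Ideal (𝓞 K)) ≤ 5 := by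
  obtain ⟨I, hIC, hI⟩ :=
    exists_ideal_in_class_of_finrank_eq_two (finrank_eq_two_of_quadraticAlgebra_algEquiv e) C
  refine ⟨I, hIC, Nat.le_of_lt_succ ?_⟩
  have hsqrt : √(68 : ℝ) < 9 := by
    rw [Real.sqrt_lt' (by norm_num)]
    norm_num
  rw [discr_eq_four_mul_of_quadraticAlgebra_algEquiv e] at hI
  have hlt : (Ideal.absNorm (I : Ideal (𝓞 K)) : ℝ) < 6 :=
    calc _ ≤ 2 / Real.pi * √|((4 * -17 : ℤ) : ℝ)| := hI
      _ = 2 / Real.pi * √68 := by norm_num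
      _ < 2 / 3 * 9 := by
        gcongr
        exact Real.pi_gt_three
      _ = 6 := by norm_num
  exact_mod_cast hlt

theorem mem_zpowers_mk0_span_three (e : QuadraticAlgebra ℤ (-17) 0 ≃ₐ[ℤ] 𝓞 K)
    {P : (Ideal (𝓞 K))⁰} (hP : (P : Ideal (𝓞 K)) = Ideal.span {3, 1 + e ω})
    (C : ClassGroup (𝓞 K)) : C ∈ Subgroup.zpowers (ClassGroup.mk0 P) := by
  have hζ : e ω ^ 2 = -17 := by simpa using algEquiv_omega_sq e
  obtain ⟨I, rfl, hI⟩ := exists_ideal_in_class_of_absNorm_le_five e C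
  refine mk0_mem_of_forall_isPrime_le I.2 fun J hJ hJp hIJ ↦ ?_
  have hJ5 : Ideal.absNorm J ≤ 5 :=
    (Nat.le_of_dvd (Ideal.absNorm_pos_of_nonZeroDivisors I)
      (Ideal.absNorm_dvd_absNorm_of_le hIJ)).trans hI
  have hJ0 := (Ideal.absNorm_pos_of_nonZeroDivisors ⟨J, hJ⟩).ne'
  have hmem := Subgroup.mem_zpowers (ClassGroup.mk0 P)
  obtain rfl | rfl | rfl := eq_span_of_isPrime_of_absNorm_le_five e hJp hJ0 hJ5
  · refine mk0_mem_of_mul_eq_span_singleton (I := P ^ 2) (x := 1 + e ω) ?_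
      (by rw [map_pow]; exact pow_mem hmem 2)
    rw [SubmonoidClass.coe_pow, hP, span_three_pow_two hζ, span_two_mul_span_nine hζ]
  · have hPJ : P = ⟨_, hJ⟩ := Subtype.ext hP
    rwa [← hPJ]
  · refine mk0_mem_of_mul_eq_span_singleton (x := 3) ?_ hmem
    rw [hP, span_three_mul_span_three_conj hζ]

theorem orderOf_mk0_span_three (e : QuadraticAlgebra ℤ (-17) 0 ≃ₐ[ℤ] S)
    {P : (Ideal S)⁰} (hP : (P : Ideal S) = Ideal.span {3, 1 + e ω}) :
    orderOf (ClassGroup.mk0 P) = 4 := by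
  have hζ : e ω ^ 2 = -17 := by simpa using algEquiv_omega_sq e
  refine orderOf_eq_prime_pow (p := 2) (n := 1) ?_ ?_ <;>
    rw [← map_pow, ClassGroup.mk0_eq_one_iff, SubmonoidClass.coe_pow, hP]
  · rw [pow_one, span_three_pow_two hζ]
    simpa using not_isPrincipal_span_pair e (m := 9) (a := 1) (by norm_num) (by norm_num)
      (by norm_num)
  · exact span_three_pow_four hζ ▸ ⟨_, rfl⟩

end SqrtNegSeventeen

/-- The ideal `(3, 1+ω)` of `𝓞_K`, `K = ℚ(√−17)`, is prime of absolute norm `3`, and its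
ideal class has order `4` in the class group; in particular it generates the class group. -/
theorem ideal_three_one_add_omega_generates_classGroup
    (K : Type*) [Field K] [NumberField K] (ω : K)
    (hω : ω ^ 2 = -17) (hK : Algebra.adjoin ℚ {ω} = ⊤)
    (ζ : 𝓞 K) (hζ : (ζ : K) = ω)
    (P : Ideal (𝓞 K)) (hP : P = Ideal.span {(3 : 𝓞 K), 1 + ζ})
    (hP0 : P ∈ (Ideal (𝓞 K))⁰) :
    P.IsPrime ∧ Ideal.absNorm P = 3 ∧
      orderOf (ClassGroup.mk0 ⟨P, hP0⟩) = 4 ∧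
      ∀ x : ClassGroup (𝓞 K), x ∈ Subgroup.zpowers (ClassGroup.mk0 ⟨P, hP0⟩) := by
  have hζω : algebraMap (𝓞 K) K ζ = ω := hζ
  have hsq : ζ ^ 2 = (-17 : ℤ) := RingOfIntegers.coe_injective (by
    rw [map_pow, hζω, hω, map_intCast, Int.cast_neg, Int.cast_ofNat])
  have hsqfree : Squarefree (-17 : ℤ) :=
    (Int.prime_iff_natAbs_prime.mpr (by norm_num)).squarefree
  obtain ⟨e, rfl⟩ := exists_quadraticAlgebra_algEquiv_ringOfIntegers hsqfree (by decide) hsq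
    (by rwa [hζω])
  have hmax := isMaximal_span_pair e Nat.prime_three (a := 1) (by norm_num)
  have hnorm := absNorm_span_pair e (m := 3) (a := 1) (by norm_num)
  simp only [Nat.cast_ofNat, Int.cast_one, ← hP] at hmax hnorm
  exact ⟨hmax.isPrime, hnorm, orderOf_mk0_span_three e hP, mem_zpowers_mk0_span_three e hP⟩
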